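/- arXiv:1707.09563 — 3 statements merged into one kernel-verified Lean document; each statement's English description precedes it below -/
import Mathlib

section
/- Let U be a real random variable with law μ_U and continuous cdf F_U, and let X be a {0,1}-valued random variable on the same probability space with p_x = P(X = x) and p_1 ∈ (0,1). Suppose X is c-dependent with U for some c ∈ [0,1]. Then for each x ∈ {0,1} and every u ∈ ℝ, P(U ≤ u | X = x) ≥ max{ F_U(u) − (c/p_x)·min{F_U(u), 1 − F_U(u)}, (F_U(u) − 1)/p_x + 1, 0 }. -/
open MeasureTheory Set

noncomputable section

/-- `X` is `c`-dependent with the real random variable `V`: there is a measurable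
version `g` of `v ↦ P(X = 1 ∣ V = v)` taking values in `[0,1]` such that
`|g(v) - P(X = 1)| ≤ c` for `μ_V`-almost every `v`. -/
def CDep {Ω : Type*} [MeasurableSpace Ω] (P : Measure Ω) (X : Ω → ℕ) (V : Ω → ℝ)
    (c : ℝ) : Prop :=
  ∃ g : ℝ → ℝ, Measurable g ∧ (∀ v, 0 ≤ g v ∧ g v ≤ 1) ∧
    (∀ A : Set ℝ, MeasurableSet A →
      (P ({ω | X ω = 1} ∩ V ⁻¹' A)).toReal = ∫ v in A, g v ∂(Measure.map V P)) ∧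
    (∀ᵐ v ∂(Measure.map V P), |g v - (P {ω | X ω = 1}).toReal| ≤ c)

/-- Key estimate: `|P(X = 1, U ∈ A) - p₁ P(U ∈ A)| ≤ c P(U ∈ A)`. -/
lemma CDep.abs_sub_le {Ω : Type*} [MeasurableSpace Ω]
    (P : Measure Ω) [IsProbabilityMeasure P] (U : Ω → ℝ) (X : Ω → ℕ) (hU : Measurable U)
    (c : ℝ) (hdep : CDep P X U c) (A : Set ℝ) (hA : MeasurableSet A) :
    |(P ({ω | X ω = 1} ∩ U ⁻¹' A)).toReal
      - (P {ω | X ω = 1}).toReal * (P (U ⁻¹' A)).toReal| ≤ c * (P (U ⁻¹' A)).toReal := by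
  obtain ⟨g, hg, hg01, hgA, hgc⟩ := hdep
  have : IsProbabilityMeasure (Measure.map U P) := Measure.isProbabilityMeasure_map hU.aemeasurable
  have hgi : Integrable g (Measure.map U P) := by
    refine Integrable.of_bound hg.aestronglyMeasurable 1 (Filter.Eventually.of_forall fun v => ?_)
    rw [Real.norm_eq_abs, abs_of_nonneg (hg01 v).1]
    exact (hg01 v).2
  have hm : (P (U ⁻¹' A)).toReal = (Measure.map U P).real A := by
    rw [Measure.real, Measure.map_apply hU hA]
  have h1 : (P {ω | X ω = 1}).toReal * (P (U ⁻¹' A)).toReal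
      = ∫ v in A, (P {ω | X ω = 1}).toReal ∂(Measure.map U P) := by
    rw [hm, setIntegral_const, smul_eq_mul, mul_comm]
  rw [hgA A hA, h1, ← integral_sub hgi.integrableOn (integrable_const _), hm]
  rw [← Real.norm_eq_abs]
  refine norm_setIntegral_le_of_norm_le_const_ae' (measure_lt_top _ _) ?_
  filter_upwards [hgc] with v hv _
  exact hv

/-- Theorem 1 (lower cdf bound): under `c`-dependence, for each `x ∈ {0,1}` and all `u`,
`P(U ≤ u ∣ X = x) ≥ max { F_U(u) - (c/p_x) min{F_U(u), 1-F_U(u)}, (F_U(u)-1)/p_x + 1, 0 }`. -/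
theorem cdf_lower_bound_c_dep {Ω : Type*} [MeasurableSpace Ω]
    (P : Measure Ω) [IsProbabilityMeasure P]
    (U : Ω → ℝ) (X : Ω → ℕ) (hU : Measurable U) (hX : Measurable X)
    (hX01 : ∀ ω, X ω ≤ 1)
    (hFcont : Continuous fun u : ℝ => (P {ω | U ω ≤ u}).toReal)
    (hp1 : (P {ω | X ω = 1}).toReal ∈ Set.Ioo (0:ℝ) 1)
    (c : ℝ) (hc : c ∈ Set.Icc (0:ℝ) 1)
    (hdep : CDep P X U c) :
    ∀ x : ℕ, x ≤ 1 → ∀ u : ℝ,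
      max (max
            ((P {ω | U ω ≤ u}).toReal
              - c / (P {ω | X ω = x}).toReal
                * min (P {ω | U ω ≤ u}).toReal (1 - (P {ω | U ω ≤ u}).toReal))
            (((P {ω | U ω ≤ u}).toReal - 1) / (P {ω | X ω = x}).toReal + 1))
          0 ≤
        (P ({ω | U ω ≤ u} ∩ {ω | X ω = x})).toReal / (P {ω | X ω = x}).toReal := by
  intro x hx u
  have hA := CDep.abs_sub_le P U X hU c hdep (Iic u) measurableSet_Iic
  have hB := CDep.abs_sub_le P U X hU c hdep (Ioi u) measurableSet_Ioi
  have e1 : U ⁻¹' (Iic u) = {ω | U ω ≤ u} := rfl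
  have e2 : U ⁻¹' (Ioi u) = {ω | U ω ≤ u}ᶜ := by ext ω; simp
  have e3 : {ω | X ω = 0} = {ω | X ω = 1}ᶜ := by
    ext ω
    have := hX01 ω
    simp only [mem_ofPred_eq, mem_compl_iff]
    omega
  have mS : MeasurableSet {ω | U ω ≤ u} := hU measurableSet_Iic
  have mT : MeasurableSet {ω | X ω = 1} := hX (measurableSet_singleton 1)
  rw [e1] at hA
  rw [e2] at hB
  have hx' : x = 0 ∨ x = 1 := by omega
  have key : ∀ F p a : ℝ, 0 < p → 0 ≤ a → |a - p * F| ≤ c * F → |a - p * F| ≤ c * (1 - F) →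
      p - (1 - F) ≤ a →
      max (max (F - c / p * min F (1 - F)) ((F - 1) / p + 1)) 0 ≤ a / p := by
    intro F p a hp ha h1 h2 h3
    refine max_le (max_le ?_ ?_) (by positivity)
    · rw [le_div_iff₀ hp]
      have : (F - c / p * min F (1 - F)) * p = F * p - c * min F (1 - F) := by
        field_simp
      rw [this]
      rcases min_choice F (1 - F) with h | h <;> rw [h]
      · linarith [(abs_le.1 h1).1]
      · linarith [(abs_le.1 h2).1]
    · rw [le_div_iff₀ hp]
      have : ((F - 1) / p + 1) * p = F - 1 + p := by field_simp
      linarith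
  generalize hS : {ω | U ω ≤ u} = S at *
  simp only [show ∀ s, (P s).toReal = P.real s from fun _ => rfl] at *
  have q1 := probReal_compl_eq_one_sub (μ := P) mS
  have q2 := probReal_compl_eq_one_sub (μ := P) mT
  have q3 := measureReal_inter_add_sdiff (μ := P) (s := {ω | X ω = 1}) mS
  have q4 := measureReal_inter_add_sdiff (μ := P) (s := S) mT
  rw [diff_eq] at q3 q4
  rw [inter_comm S {ω | X ω = 1}] at q4
  rw [q1] at hB
  have q5 : P.real ({ω | X ω = 1} ∩ Sᶜ) ≤ P.real Sᶜ := measureReal_mono inter_subset_right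
  have q6 : P.real ({ω | X ω = 1} ∩ S) ≤ P.real {ω | X ω = 1} := measureReal_mono inter_subset_left
  rw [abs_le] at hA hB
  rcases hx' with rfl | rfl
  · rw [e3]
    refine key _ _ _ ?_ measureReal_nonneg ?_ ?_ ?_
    · linarith [hp1.2]
    · rw [abs_le, q2]; constructor <;> linarith
    · rw [abs_le, q2]; constructor <;> linarith
    · linarith
  · rw [inter_comm]
    refine key _ _ _ hp1.1 measureReal_nonneg ?_ ?_ ?_
    · rw [abs_le]; exact hA
    · rw [abs_le]; constructor <;> linarith
    · linarith
end
end

section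
/- Assume the potential outcomes setup and suppose X is c-dependent with both Y_1 and Y_0, for c ∈ [0,1]. Then for every τ ∈ (0,1), the quantile treatment effect Q_{Y_1}(τ) − Q_{Y_0}(τ) lies in the interval [ Q̲^c_1(τ) − Q̄^c_0(τ), Q̄^c_1(τ) − Q̲^c_0(τ) ] (with possibly infinite endpoints). -/
open MeasureTheory Set

noncomputable section

/-- `P(X = x)`. -/
def px {Ω : Type*} [MeasurableSpace Ω] (P : Measure Ω) (X : Ω → ℕ) (x : ℕ) : ℝ :=
  (P {ω | X ω = x}).toReal

/-- The conditional cdf `y ↦ P(V ≤ y ∣ X = x)`. -/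
def condCDF' {Ω : Type*} [MeasurableSpace Ω] (P : Measure Ω) (X : Ω → ℕ) (V : Ω → ℝ)
    (x : ℕ) (y : ℝ) : ℝ :=
  (P ({ω | V ω ≤ y} ∩ {ω | X ω = x})).toReal / (P {ω | X ω = x}).toReal

/-- The (extended-real-valued) quantile function of a cdf `G`, equal to the left
inverse of `G` on `(0,1)` and extended by the support endpoints `lo` at `0` and
`hi` at `1`. -/
def Qgen (G : ℝ → ℝ) (lo hi : EReal) (τ : ℝ) : EReal :=
  if τ ≤ 0 then lo else if 1 ≤ τ then hi
  else ((sInf {y : ℝ | τ ≤ G y} : ℝ) : EReal)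

/-- The clipped quantile level used in the upper quantile bound. -/
def qUp (p c τ : ℝ) : ℝ := min (min (τ + c / p * min τ (1 - τ)) (τ / p)) 1

/-- The clipped quantile level used in the lower quantile bound. -/
def qLo (p c τ : ℝ) : ℝ := max (max (τ - c / p * min τ (1 - τ)) ((τ - 1) / p + 1)) 0

/-- The `τ`-th quantile of the random variable `V`. -/
def quant {Ω : Type*} [MeasurableSpace Ω] (P : Measure Ω) (V : Ω → ℝ) (τ : ℝ) : ℝ :=
  sInf {z : ℝ | τ ≤ (P {ω | V ω ≤ z}).toReal}

/-- Purely analytic core of the quantile bounds. -/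
lemma quant_core (F G : ℝ → ℝ) (lo hi : EReal) (p c τ : ℝ) (hp : 0 < p) (hc : 0 ≤ c)
    (hτ0 : 0 < τ) (hτ1 : τ < 1)
    (hFm : Monotone F) (hFc : Continuous F) (hGm : Monotone G)
    (hFb : Filter.Tendsto F Filter.atBot (nhds 0))
    (hFt : Filter.Tendsto F Filter.atTop (nhds 1))
    (hmono : StrictMonoOn G {y : ℝ | lo ≤ (y : EReal) ∧ (y : EReal) ≤ hi})
    (hG1 : ∀ y, G y ≤ 1)
    (hGlo : ∀ y : ℝ, (y : EReal) ≤ lo → G y = 0)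
    (hlo : ∀ y : ℝ, (y : EReal) ≤ lo → F y = 0)
    (hhi : ∀ y : ℝ, hi ≤ (y : EReal) → F y = 1)
    (h1 : ∀ y, p * G y ≤ F y) (h2 : ∀ y, p * (1 - G y) ≤ 1 - F y)
    (h3 : ∀ y, p * G y ≤ (p + c) * F y) (h4 : ∀ y, (p - c) * F y ≤ p * G y)
    (h5 : ∀ y, p * (1 - G y) ≤ (p + c) * (1 - F y))
    (h6 : ∀ y, (p - c) * (1 - F y) ≤ p * (1 - G y)) :
    Qgen G lo hi (qLo p c τ) ≤ ((sInf {z : ℝ | τ ≤ F z} : ℝ) : EReal) ∧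
    ((sInf {z : ℝ | τ ≤ F z} : ℝ) : EReal) ≤ Qgen G lo hi (qUp p c τ) := by
  set q := sInf {z : ℝ | τ ≤ F z} with hq
  have hne : {z : ℝ | τ ≤ F z}.Nonempty := by
    obtain ⟨y, hy⟩ := (hFt.eventually (lt_mem_nhds hτ1)).exists
    exact ⟨y, hy.le⟩
  have hbd : BddBelow {z : ℝ | τ ≤ F z} := by
    obtain ⟨y, hy⟩ := (hFb.eventually (gt_mem_nhds hτ0)).exists
    refine ⟨y, fun z hz => ?_⟩
    by_contra hlt
    have := hFm (not_le.mp hlt).le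
    have hz' : τ ≤ F z := hz
    linarith
  have hmem : τ ≤ F q := by
    have hcl : IsClosed {z : ℝ | τ ≤ F z} := isClosed_le continuous_const hFc
    exact hcl.csInf_mem hne hbd
  have hFq : F q = τ := by
    refine le_antisymm ?_ hmem
    by_contra hlt
    have hev : ∀ᶠ y in nhds q, τ < F y := hFc.continuousAt.eventually (lt_mem_nhds (not_le.mp hlt))
    obtain ⟨l, hl, hl2⟩ := exists_Ioc_subset_of_mem_nhds hev ⟨q - 1, by linarith⟩
    have hm : (l + q) / 2 ∈ Set.Ioc l q := ⟨by linarith, by linarith⟩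
    have h := hl2 hm
    have : q ≤ (l + q) / 2 := csInf_le hbd (show τ ≤ F ((l + q) / 2) from le_of_lt h)
    linarith
  have hloq : lo < (q : EReal) := by
    by_contra h
    have := hlo q (not_lt.mp h)
    linarith
  have hqhi : (q : EReal) < hi := by
    by_contra h
    have := hhi q (not_lt.mp h)
    linarith
  have hup : G q ≤ qUp p c τ := by
    unfold qUp
    refine le_min (le_min ?_ ?_) (hG1 q)
    · have a := h3 q
      have b := h6 q
      rw [hFq] at a b
      rcases min_cases τ (1 - τ) with ⟨e, _⟩ | ⟨e, _⟩ <;> rw [e]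
      · have : p * G q ≤ p * (τ + c / p * τ) := by
          have : p * (τ + c / p * τ) = (p + c) * τ := by field_simp
          linarith
        exact le_of_mul_le_mul_left this hp
      · have : p * G q ≤ p * (τ + c / p * (1 - τ)) := by
          have : p * (τ + c / p * (1 - τ)) = p * τ + c * (1 - τ) := by field_simp
          linarith
        exact le_of_mul_le_mul_left this hp
    · rw [le_div_iff₀ hp]
      have := h1 q
      linarith
  have hlw : qLo p c τ ≤ 0 ∨ qLo p c τ ≤ G q := by
    have : max (τ - c / p * min τ (1 - τ)) ((τ - 1) / p + 1) ≤ G q := by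
      refine max_le ?_ ?_
      · have a := h4 q
        have b := h5 q
        rw [hFq] at a b
        rcases min_cases τ (1 - τ) with ⟨e, _⟩ | ⟨e, _⟩ <;> rw [e]
        · have : p * (τ - c / p * τ) ≤ p * G q := by
            have : p * (τ - c / p * τ) = (p - c) * τ := by field_simp
            linarith
          exact le_of_mul_le_mul_left this hp
        · have : p * (τ - c / p * (1 - τ)) ≤ p * G q := by
            have : p * (τ - c / p * (1 - τ)) = p * τ - c * (1 - τ) := by field_simp
            linarith
          exact le_of_mul_le_mul_left this hp
      · have a := h2 q
        rw [hFq] at a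
        have : p * ((τ - 1) / p + 1) ≤ p * G q := by
          have : p * ((τ - 1) / p + 1) = τ - 1 + p := by field_simp
          linarith
        exact le_of_mul_le_mul_left this hp
    unfold qLo
    rcases le_total (max (τ - c / p * min τ (1 - τ)) ((τ - 1) / p + 1)) 0 with h | h
    · left; rw [max_eq_right h]
    · right; rw [max_eq_left h]; exact this
  have hcp : 0 ≤ c / p := div_nonneg hc hp.le
  have hmin : 0 < min τ (1 - τ) := lt_min hτ0 (by linarith)
  have hcm : 0 ≤ c / p * min τ (1 - τ) := mul_nonneg hcp hmin.le
  have hup0 : 0 < qUp p c τ := by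
    unfold qUp
    exact lt_min (lt_min (by linarith) (div_pos hτ0 hp)) one_pos
  have hlo1 : qLo p c τ < 1 := by
    unfold qLo
    have : (τ - 1) / p < 0 := div_neg_of_neg_of_pos (by linarith) hp
    exact max_lt (max_lt (by linarith) (by linarith)) one_pos
  constructor
  · unfold Qgen
    split_ifs with ha hb
    · exact hloq.le
    · linarith
    · have hl : qLo p c τ ≤ G q := hlw.resolve_left ha
      push Not at ha
      refine EReal.coe_le_coe_iff.mpr (csInf_le ?_ hl)
      obtain ⟨y, hy⟩ := (hFb.eventually (gt_mem_nhds (mul_pos hp ha))).exists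
      refine ⟨y, fun z hz => ?_⟩
      by_contra hlt
      have e1 := hGm (not_le.mp hlt).le
      have e2 : qLo p c τ ≤ G z := hz
      have e3 := h1 y
      have e4 := lt_of_mul_lt_mul_left (lt_of_le_of_lt e3 hy) hp.le
      linarith
  · unfold Qgen
    split_ifs with ha hb
    · linarith
    · exact hqhi.le
    · push Not at hb
      refine EReal.coe_le_coe_iff.mpr (le_csInf ?_ ?_)
      · have hpos : 1 - p * (1 - qUp p c τ) < 1 := by
          have := mul_pos hp (sub_pos.mpr hb)
          linarith
        obtain ⟨y, hy⟩ := (hFt.eventually (lt_mem_nhds hpos)).exists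
        refine ⟨y, ?_⟩
        have e := h2 y
        have e2 : p * (1 - G y) < p * (1 - qUp p c τ) := by linarith
        have := lt_of_mul_lt_mul_left e2 hp.le
        show qUp p c τ ≤ G y
        linarith
      · intro y hy
        have hy' : qUp p c τ ≤ G y := hy
        by_contra hlt
        push Not at hlt
        have : G y < qUp p c τ := by
          rcases le_total (y : EReal) lo with h | h
          · rw [hGlo y h]; exact hup0
          · refine lt_of_lt_of_le (hmono ⟨h, ?_⟩ ⟨hloq.le, hqhi.le⟩ hlt) hup
            exact ((EReal.coe_lt_coe_iff.mpr hlt).trans hqhi).le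
        linarith

/-- Under `c`-dependence, joint probabilities are bounded by multiples of the marginals. -/
lemma cdep_bound {Ω : Type*} [MeasurableSpace Ω] (P : Measure Ω) [IsProbabilityMeasure P]
    (X : Ω → ℕ) (V : Ω → ℝ) (hV : Measurable V) (c : ℝ) (h : CDep P X V c)
    (A : Set ℝ) (hA : MeasurableSet A) :
    (px P X 1 - c) * P.real (V ⁻¹' A) ≤ P.real ({ω | X ω = 1} ∩ V ⁻¹' A) ∧
    P.real ({ω | X ω = 1} ∩ V ⁻¹' A) ≤ (px P X 1 + c) * P.real (V ⁻¹' A) := by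
  obtain ⟨g, hg, hg01, hgA, hgc⟩ := h
  have : IsProbabilityMeasure (Measure.map V P) := Measure.isProbabilityMeasure_map hV.aemeasurable
  have hint : Integrable g (Measure.map V P) := by
    refine Integrable.of_bound hg.aestronglyMeasurable 1 (Filter.Eventually.of_forall fun v => ?_)
    rw [Real.norm_eq_abs, abs_le]
    exact ⟨by linarith [(hg01 v).1], (hg01 v).2⟩
  have e : P.real ({ω | X ω = 1} ∩ V ⁻¹' A) = ∫ v in A, g v ∂(Measure.map V P) := hgA A hA
  have hmA : (Measure.map V P).real A = P.real (V ⁻¹' A) := map_measureReal_apply hV hA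
  have hcst : ∀ k : ℝ, ∫ _ in A, k ∂(Measure.map V P) = k * P.real (V ⁻¹' A) := by
    intro k
    rw [setIntegral_const, smul_eq_mul, hmA, mul_comm]
  rw [e, ← hcst, ← hcst]
  constructor
  · refine setIntegral_mono_ae (integrable_const _).integrableOn hint.integrableOn ?_
    filter_upwards [hgc] with v hv
    rw [abs_le] at hv
    unfold px
    linarith [hv.1]
  · refine setIntegral_mono_ae hint.integrableOn (integrable_const _).integrableOn ?_
    filter_upwards [hgc] with v hv
    rw [abs_le] at hv
    unfold px
    linarith [hv.2]

/-- Splitting a probability over the two treatment arms. -/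
lemma arm_split {Ω : Type*} [MeasurableSpace Ω] (P : Measure Ω) [IsProbabilityMeasure P]
    (X : Ω → ℕ) (hXm : Measurable X) (hX01 : ∀ ω, X ω ≤ 1) (S : Set Ω) :
    P.real S = P.real ({ω | X ω = 1} ∩ S) + P.real ({ω | X ω = 0} ∩ S) := by
  have hm : MeasurableSet {ω | X ω = 1} := hXm (measurableSet_singleton 1)
  rw [← measureReal_inter_add_sdiff (μ := P) (s := S) hm]
  congr 2
  · rw [inter_comm]
  · ext ω
    have := hX01 ω
    simp only [mem_diff, mem_setOf_eq, mem_inter_iff]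
    constructor
    · rintro ⟨a, b⟩; exact ⟨by omega, a⟩
    · rintro ⟨a, b⟩; exact ⟨b, by omega⟩

/-- Bounds for a single arm. -/
lemma arm_bounds {Ω : Type*} [MeasurableSpace Ω]
    (P : Measure Ω) [IsProbabilityMeasure P] (V : Ω → ℝ) (X : Ω → ℕ)
    (hV : Measurable V) (hXm : Measurable X) (hX01 : ∀ ω, X ω ≤ 1)
    (hp1 : px P X 1 ∈ Set.Ioo (0:ℝ) 1) (lo hi : EReal)
    (hcont : ∀ x' ≤ 1, Continuous (condCDF' P X V x'))
    (hmono : ∀ x' ≤ 1, StrictMonoOn (condCDF' P X V x')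
      {y : ℝ | lo ≤ (y : EReal) ∧ (y : EReal) ≤ hi})
    (hsupp : ∀ x' ≤ 1, ∀ y : ℝ,
      ((y : EReal) ≤ lo → condCDF' P X V x' y = 0) ∧
      (hi ≤ (y : EReal) → condCDF' P X V x' y = 1))
    (c : ℝ) (hc : c ∈ Set.Icc (0:ℝ) 1) (hdep : CDep P X V c)
    (x : ℕ) (hx : x ≤ 1) (τ : ℝ) (hτ0 : 0 < τ) (hτ1 : τ < 1) :
    Qgen (condCDF' P X V x) lo hi (qLo (px P X x) c τ) ≤ ((quant P V τ : ℝ) : EReal) ∧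
    ((quant P V τ : ℝ) : EReal) ≤ Qgen (condCDF' P X V x) lo hi (qUp (px P X x) c τ) := by
  have hsum : px P X 1 + px P X 0 = 1 := by
    have h := arm_split P X hXm hX01 Set.univ
    simp only [inter_univ, probReal_univ] at h
    exact h.symm
  have hpos : ∀ x' ≤ 1, 0 < px P X x' := by
    intro x' hx'
    have : x' = 0 ∨ x' = 1 := by omega
    rcases this with rfl | rfl
    · linarith [hp1.2]
    · exact hp1.1
  have hpG : ∀ x' ≤ 1, ∀ y, px P X x' * condCDF' P X V x' y
      = P.real ({ω | X ω = x'} ∩ V ⁻¹' Iic y) := by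
    intro x' hx' y
    have h := (hpos x' hx').ne'
    unfold px at h
    unfold condCDF' px
    rw [mul_div_cancel₀ _ h, inter_comm]
    rfl
  have hFsplit : ∀ y, P.real (V ⁻¹' Iic y)
      = px P X 1 * condCDF' P X V 1 y + px P X 0 * condCDF' P X V 0 y := by
    intro y
    rw [hpG 1 le_rfl, hpG 0 zero_le_one]
    exact arm_split P X hXm hX01 _
  have hG1p : ∀ x' ≤ 1, ∀ y, px P X x' * (1 - condCDF' P X V x' y)
      = P.real ({ω | X ω = x'} ∩ V ⁻¹' Ioi y) := by
    intro x' hx' y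
    rw [mul_sub, mul_one, hpG x' hx']
    have h := measureReal_inter_add_sdiff (μ := P) (s := {ω | X ω = x'}) (hV (measurableSet_Iic (a := y)))
    have e : {ω | X ω = x'} \ V ⁻¹' Iic y = {ω | X ω = x'} ∩ V ⁻¹' Ioi y := by
      ext ω; simp
    rw [e] at h
    have : px P X x' = P.real {ω | X ω = x'} := rfl
    linarith
  have hF1 : ∀ y, 1 - P.real (V ⁻¹' Iic y) = P.real (V ⁻¹' Ioi y) := by
    intro y
    rw [← probReal_compl_eq_one_sub (hV measurableSet_Iic), ← preimage_compl, compl_Iic]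
  have hb : ∀ A : Set ℝ, MeasurableSet A →
      (px P X x - c) * P.real (V ⁻¹' A) ≤ P.real ({ω | X ω = x} ∩ V ⁻¹' A) ∧
      P.real ({ω | X ω = x} ∩ V ⁻¹' A) ≤ (px P X x + c) * P.real (V ⁻¹' A) := by
    intro A hA
    have h := cdep_bound P X V hV c hdep A hA
    have : x = 0 ∨ x = 1 := by omega
    rcases this with rfl | rfl
    · have hs := arm_split P X hXm hX01 (V ⁻¹' A)
      have e : px P X 0 = 1 - px P X 1 := by linarith
      rw [e]
      constructor <;> nlinarith [h.1, h.2]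
    · exact h
  have : IsProbabilityMeasure (Measure.map V P) := Measure.isProbabilityMeasure_map hV.aemeasurable
  have hcdf : (fun y => P.real (V ⁻¹' Iic y)) = ProbabilityTheory.cdf (Measure.map V P) := by
    funext y
    rw [ProbabilityTheory.cdf_eq_real, map_measureReal_apply hV measurableSet_Iic]
  have key := quant_core (fun y => P.real (V ⁻¹' Iic y)) (condCDF' P X V x) lo hi (px P X x) c τ
    (hpos x hx) hc.1 hτ0 hτ1
    (by rw [hcdf]; exact ProbabilityTheory.monotone_cdf _)
    (by
      have : (fun y => P.real (V ⁻¹' Iic y)) = fun y =>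
        px P X 1 * condCDF' P X V 1 y + px P X 0 * condCDF' P X V 0 y := funext hFsplit
      rw [this]
      exact (continuous_const.mul (hcont 1 le_rfl)).add (continuous_const.mul (hcont 0 zero_le_one)))
    (by
      intro a b hab
      refine le_of_mul_le_mul_left ?_ (hpos x hx)
      rw [hpG x hx, hpG x hx]
      exact measureReal_mono (inter_subset_inter_right _ (preimage_mono (Iic_subset_Iic.mpr hab))))
    (by rw [hcdf]; exact ProbabilityTheory.tendsto_cdf_atBot _)
    (by rw [hcdf]; exact ProbabilityTheory.tendsto_cdf_atTop _)
    (hmono x hx)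
    (by
      intro y
      have h : 0 ≤ px P X x * (1 - condCDF' P X V x y) := by
        rw [hG1p x hx]; exact measureReal_nonneg
      have := nonneg_of_mul_nonneg_right h (hpos x hx)
      linarith)
    (fun y hy => (hsupp x hx y).1 hy)
    (by
      intro y hy
      simp only [hFsplit, (hsupp 1 le_rfl y).1 hy, (hsupp 0 zero_le_one y).1 hy]
      ring)
    (by
      intro y hy
      simp only [hFsplit, (hsupp 1 le_rfl y).2 hy, (hsupp 0 zero_le_one y).2 hy]
      linarith)
    (by intro y; rw [hpG x hx]; exact measureReal_mono inter_subset_right)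
    (by intro y; rw [hG1p x hx, hF1]; exact measureReal_mono inter_subset_right)
    (by intro y; rw [hpG x hx]; exact (hb _ measurableSet_Iic).2)
    (by intro y; rw [hpG x hx]; exact (hb _ measurableSet_Iic).1)
    (by intro y; rw [hG1p x hx, hF1]; exact (hb _ measurableSet_Ioi).2)
    (by intro y; rw [hG1p x hx, hF1]; exact (hb _ measurableSet_Ioi).1)
  exact key

/-- Bounds on the quantile treatment effect under `c`-dependence: for `τ ∈ (0,1)`,
`Q_{Y_1}(τ) - Q_{Y_0}(τ) ∈ [Q̲ᶜ₁(τ) - Q̄ᶜ₀(τ), Q̄ᶜ₁(τ) - Q̲ᶜ₀(τ)]`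
(with possibly infinite endpoints). -/
theorem qte_bounds {Ω : Type*} [MeasurableSpace Ω]
    (P : Measure Ω) [IsProbabilityMeasure P]
    (Yv : ℕ → Ω → ℝ) (X : Ω → ℕ) (Y : Ω → ℝ)
    (hYm : ∀ x, Measurable (Yv x)) (hXm : Measurable X)
    (hX01 : ∀ ω, X ω ≤ 1)
    (hY : ∀ ω, Y ω = Yv (X ω) ω)
    (hp1 : px P X 1 ∈ Set.Ioo (0:ℝ) 1)
    (lo hi : ℕ → EReal) (hlh : ∀ x ≤ 1, lo x < hi x)
    (hcont : ∀ x ≤ 1, ∀ x' ≤ 1, Continuous (condCDF' P X (Yv x) x'))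
    (hmono : ∀ x ≤ 1, ∀ x' ≤ 1, StrictMonoOn (condCDF' P X (Yv x) x')
      {y : ℝ | lo x ≤ (y : EReal) ∧ (y : EReal) ≤ hi x})
    (hsupp : ∀ x ≤ 1, ∀ x' ≤ 1, ∀ y : ℝ,
      ((y : EReal) ≤ lo x → condCDF' P X (Yv x) x' y = 0) ∧
      (hi x ≤ (y : EReal) → condCDF' P X (Yv x) x' y = 1))
    (c : ℝ) (hc : c ∈ Set.Icc (0:ℝ) 1)
    (hdep1 : CDep P X (Yv 1) c) (hdep0 : CDep P X (Yv 0) c) :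
    ∀ τ : ℝ, 0 < τ → τ < 1 →
      Qgen (condCDF' P X Y 1) (lo 1) (hi 1) (qLo (px P X 1) c τ) -
          Qgen (condCDF' P X Y 0) (lo 0) (hi 0) (qUp (px P X 0) c τ) ≤
        ((quant P (Yv 1) τ - quant P (Yv 0) τ : ℝ) : EReal) ∧
      ((quant P (Yv 1) τ - quant P (Yv 0) τ : ℝ) : EReal) ≤
        Qgen (condCDF' P X Y 1) (lo 1) (hi 1) (qUp (px P X 1) c τ) -
          Qgen (condCDF' P X Y 0) (lo 0) (hi 0) (qLo (px P X 0) c τ) := by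
  intro τ hτ0 hτ1
  have hYx : ∀ x, condCDF' P X Y x = condCDF' P X (Yv x) x := by
    intro x
    funext y
    unfold condCDF'
    have : {ω | Y ω ≤ y} ∩ {ω | X ω = x} = {ω | Yv x ω ≤ y} ∩ {ω | X ω = x} := by
      ext ω
      simp only [mem_inter_iff, mem_setOf_eq]
      constructor
      · rintro ⟨a, b⟩; rw [hY, b] at a; exact ⟨a, b⟩
      · rintro ⟨a, b⟩; refine ⟨?_, b⟩; rw [hY, b]; exact a
    rw [this]
  rw [hYx 1, hYx 0, EReal.coe_sub]
  have b1 := arm_bounds P (Yv 1) X (hYm 1) hXm hX01 hp1 (lo 1) (hi 1) (hcont 1 le_rfl)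
    (hmono 1 le_rfl) (hsupp 1 le_rfl) c hc hdep1 1 le_rfl τ hτ0 hτ1
  have b0 := arm_bounds P (Yv 0) X (hYm 0) hXm hX01 hp1 (lo 0) (hi 0) (hcont 0 zero_le_one)
    (hmono 0 zero_le_one) (hsupp 0 zero_le_one) c hc hdep0 0 zero_le_one τ hτ0 hτ1
  exact ⟨EReal.sub_le_sub b1.1 b0.2, EReal.sub_le_sub b1.2 b0.1⟩
end
end

section
/- Assume the potential outcomes setup for Y_0 (continuity and common support of the conditional cdfs of Y_0 given X = x', and p_1 = P(X = 1) ∈ (0,1)), suppose X is c-dependent with Y_0 for c ∈ [0,1], suppose E(|Y| | X = x) < ∞ for x ∈ {0,1}, and suppose Y_0 and Y_1 are integrable. Let E̲_0 = ∫_0^1 Q̲^c_0(τ) dτ and Ē_0 = ∫_0^1 Q̄^c_0(τ) dτ. Then the average effect of treatment on the treated, ATT = E(Y_1 − Y_0 | X = 1), satisfies E(Y | X=1) − (Ē_0 − p_0·E(Y | X=0))/p_1 ≤ ATT ≤ E(Y | X=1) − (E̲_0 − p_0·E(Y | X=0))/p_1, where p_0 = 1 − p_1 (endpoints possibly ±∞).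 -/
open MeasureTheory Set ENNReal

noncomputable section

/-- The truncation of an extended real to `ℝ≥0∞`. -/
def toENN (a : EReal) : ℝ≥0∞ := if a = ⊤ then ⊤ else ENNReal.ofReal a.toReal

/-- The (possibly infinite) signed integral `∫_0^1 f(τ) dτ` of an
extended-real-valued function, as an extended real. -/
def eint01 (f : ℝ → EReal) : EReal :=
  ((∫⁻ τ in Set.Ioo (0:ℝ) 1, toENN (f τ) : ℝ≥0∞) : EReal) -
    ((∫⁻ τ in Set.Ioo (0:ℝ) 1, toENN (-(f τ)) : ℝ≥0∞) : EReal)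


lemma aux_quant_le {μ : Measure ℝ} [IsProbabilityMeasure μ] {τ : ℝ} (h0 : 0 < τ) (h1 : τ < 1)
    (y : ℝ) : sInf {z : ℝ | τ ≤ ProbabilityTheory.cdf μ z} ≤ y ↔ τ ≤ ProbabilityTheory.cdf μ y := by
  have hmono := ProbabilityTheory.monotone_cdf μ
  have hne : {z : ℝ | τ ≤ ProbabilityTheory.cdf μ z}.Nonempty := by
    have := (ProbabilityTheory.tendsto_cdf_atTop μ).eventually (lt_mem_nhds h1)
    obtain ⟨z, hz⟩ := this.exists
    exact ⟨z, le_of_lt hz⟩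
  have hbd : BddBelow {z : ℝ | τ ≤ ProbabilityTheory.cdf μ z} := by
    have := (ProbabilityTheory.tendsto_cdf_atBot μ).eventually (gt_mem_nhds h0)
    obtain ⟨w, hw⟩ := this.exists
    refine ⟨w, fun z hz => ?_⟩
    by_contra hlt
    have h2 := hmono (le_of_lt (not_le.mp hlt))
    have h3 : τ ≤ ProbabilityTheory.cdf μ z := hz
    linarith
  constructor
  · intro h
    have hr : Filter.Tendsto (ProbabilityTheory.cdf μ) (nhdsWithin y (Ioi y))
        (nhds (ProbabilityTheory.cdf μ y)) :=
      ((ProbabilityTheory.cdf μ).right_continuous y).mono_left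
        (nhdsWithin_mono _ Ioi_subset_Ici_self)
    refine ge_of_tendsto hr ?_
    filter_upwards [self_mem_nhdsWithin] with z hz
    obtain ⟨s, hs, hsz⟩ := exists_lt_of_csInf_lt hne (lt_of_le_of_lt h hz)
    exact le_trans hs (hmono hsz.le)
  · intro h
    exact csInf_le hbd h

lemma aux_map_quant (μ : Measure ℝ) [IsProbabilityMeasure μ] :
    AEMeasurable (fun τ : ℝ => sInf {z : ℝ | τ ≤ ProbabilityTheory.cdf μ z})
      (volume.restrict (Ioo (0:ℝ) 1)) ∧
    Measure.map (fun τ : ℝ => sInf {z : ℝ | τ ≤ ProbabilityTheory.cdf μ z})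
      (volume.restrict (Ioo (0:ℝ) 1)) = μ := by
  have hm : AEMeasurable (fun τ : ℝ => sInf {z : ℝ | τ ≤ ProbabilityTheory.cdf μ z})
      (volume.restrict (Ioo (0:ℝ) 1)) := by
    apply aemeasurable_restrict_of_monotoneOn measurableSet_Ioo
    intro a ha b hb hab
    rw [aux_quant_le ha.1 ha.2]
    exact hab.trans ((aux_quant_le hb.1 hb.2 _).mp le_rfl)
  refine ⟨hm, ?_⟩
  have : IsFiniteMeasure (volume.restrict (Ioo (0:ℝ) 1)) := ⟨by simp⟩
  refine Measure.ext_of_Iic _ _ (fun y => ?_)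
  rw [Measure.map_apply_of_aemeasurable hm measurableSet_Iic,
    Measure.restrict_apply' measurableSet_Ioo]
  have h0 := ProbabilityTheory.cdf_nonneg μ y
  have h1 := ProbabilityTheory.cdf_le_one μ y
  have hset : (fun τ : ℝ => sInf {z : ℝ | τ ≤ ProbabilityTheory.cdf μ z}) ⁻¹' Iic y ∩ Ioo (0:ℝ) 1
      = Iic (ProbabilityTheory.cdf μ y) ∩ Ioo 0 1 := by
    ext τ
    simp only [mem_inter_iff, mem_preimage, mem_Iic]
    constructor
    · rintro ⟨h, hτ⟩
      exact ⟨(aux_quant_le hτ.1 hτ.2 y).mp h, hτ⟩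
    · rintro ⟨h, hτ⟩
      exact ⟨(aux_quant_le hτ.1 hτ.2 y).mpr h, hτ⟩
  rw [hset]
  have hae : (Iic (ProbabilityTheory.cdf μ y) ∩ Ioo 0 1 : Set ℝ) =ᵐ[volume]
      (Ioc 0 (ProbabilityTheory.cdf μ y) : Set ℝ) := by
    have : (Ioo (0:ℝ) 1) =ᵐ[volume] (Ioc (0:ℝ) 1) := Ioo_ae_eq_Ioc
    suffices hs : Iic (ProbabilityTheory.cdf μ y) ∩ Ioc 0 1 = Ioc 0 (ProbabilityTheory.cdf μ y) by
      rw [← hs]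
      filter_upwards [this.mem_iff] with τ hτ
      exact propext (and_congr Iff.rfl hτ)
    ext τ
    simp only [mem_inter_iff, mem_Iic, mem_Ioc]
    constructor
    · rintro ⟨a, b, d⟩; exact ⟨b, a⟩
    · rintro ⟨a, b⟩; exact ⟨b, a, b.trans h1⟩
  rw [measure_congr hae, Real.volume_Ioc, sub_zero, ProbabilityTheory.cdf_eq_real,
    ofReal_measureReal]

lemma aux_toENN_coe (r : ℝ) : toENN (r : EReal) = ENNReal.ofReal r := by
  simp [toENN]

lemma aux_toENN_mono {a b : EReal} (h : a ≤ b) : toENN a ≤ toENN b := by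
  unfold toENN
  split_ifs with h1 h2 h2
  · exact le_rfl
  · subst h1; exact absurd (top_le_iff.mp h) h2
  · exact le_top
  · by_cases ha : a = ⊥
    · subst ha; simp
    · exact ENNReal.ofReal_le_ofReal (EReal.toReal_le_toReal h ha h2)

lemma aux_eint_mono {f g : ℝ → EReal} (h : ∀ τ ∈ Ioo (0:ℝ) 1, f τ ≤ g τ) :
    eint01 f ≤ eint01 g := by
  unfold eint01
  apply EReal.sub_le_sub
  · exact EReal.coe_ennreal_le_coe_ennreal_iff.mpr
      (setLIntegral_mono' measurableSet_Ioo (fun τ hτ => aux_toENN_mono (h τ hτ)))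
  · exact EReal.coe_ennreal_le_coe_ennreal_iff.mpr
      (setLIntegral_mono' measurableSet_Ioo
        (fun τ hτ => aux_toENN_mono (EReal.neg_le_neg_iff.mpr (h τ hτ))))

lemma aux_eint_quant (μ : Measure ℝ) [IsProbabilityMeasure μ] (hi : Integrable (fun x : ℝ => x) μ) :
    eint01 (fun τ => ((sInf {z : ℝ | τ ≤ ProbabilityTheory.cdf μ z} : ℝ) : EReal)) =
      ((∫ x, x ∂μ : ℝ) : EReal) := by
  obtain ⟨hm, hmap⟩ := aux_map_quant μ
  unfold eint01
  simp only [← EReal.coe_neg, aux_toENN_coe]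
  have e1 : ∫⁻ τ in Ioo (0:ℝ) 1, ENNReal.ofReal (sInf {z : ℝ | τ ≤ ProbabilityTheory.cdf μ z})
      = ∫⁻ x, ENNReal.ofReal x ∂μ := by
    conv_rhs => rw [← hmap]
    rw [lintegral_map' (by fun_prop) hm]
  have e2 : ∫⁻ τ in Ioo (0:ℝ) 1, ENNReal.ofReal (-sInf {z : ℝ | τ ≤ ProbabilityTheory.cdf μ z})
      = ∫⁻ x, ENNReal.ofReal (-x) ∂μ := by
    conv_rhs => rw [← hmap]
    rw [lintegral_map' (by fun_prop) hm]
  have f1 : ∫⁻ x, ENNReal.ofReal x ∂μ ≠ ⊤ := hi.lintegral_lt_top.ne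
  have f2 : ∫⁻ x, ENNReal.ofReal (-x) ∂μ ≠ ⊤ := hi.neg.lintegral_lt_top.ne
  rw [e1, e2, integral_eq_lintegral_pos_part_sub_lintegral_neg_part hi, EReal.coe_sub,
    ← EReal.coe_ennreal_toReal f1, ← EReal.coe_ennreal_toReal f2]

lemma aux_cdep {Ω : Type*} [MeasurableSpace Ω] (P : Measure Ω) [IsProbabilityMeasure P]
    (X : Ω → ℕ) (V : Ω → ℝ) (hV : Measurable V) (c : ℝ) (h : CDep P X V c) (A : Set ℝ)
    (hA : MeasurableSet A) :
    (px P X 1 - c) * (P.map V).real A ≤ (P ({ω | X ω = 1} ∩ V ⁻¹' A)).toReal ∧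
    (P ({ω | X ω = 1} ∩ V ⁻¹' A)).toReal ≤ (px P X 1 + c) * (P.map V).real A := by
  obtain ⟨g, hg, hg01, hgA, hgc⟩ := h
  have : IsProbabilityMeasure (P.map V) := Measure.isProbabilityMeasure_map hV.aemeasurable
  have hgi : Integrable g (P.map V) := by
    refine Integrable.of_bound hg.aestronglyMeasurable 1 (Filter.Eventually.of_forall fun v => ?_)
    rw [Real.norm_eq_abs, abs_of_nonneg (hg01 v).1]
    exact (hg01 v).2
  rw [hgA A hA]
  have hgc' := ae_restrict_of_ae (s := A) hgc
  constructor
  · have : ∫ v in A, (px P X 1 - c) ∂(P.map V) ≤ ∫ v in A, g v ∂(P.map V) := by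
      refine integral_mono_ae (integrable_const _) hgi.integrableOn ?_
      filter_upwards [hgc'] with v hv
      have := (abs_le.mp hv).1
      unfold px
      linarith
    rwa [setIntegral_const, smul_eq_mul, mul_comm] at this
  · have : ∫ v in A, g v ∂(P.map V) ≤ ∫ v in A, (px P X 1 + c) ∂(P.map V) := by
      refine integral_mono_ae hgi.integrableOn (integrable_const _) ?_
      filter_upwards [hgc'] with v hv
      have := (abs_le.mp hv).2
      unfold px
      linarith
    rwa [setIntegral_const, smul_eq_mul, mul_comm] at this

lemma aux_px {Ω : Type*} [MeasurableSpace Ω] (P : Measure Ω) [IsProbabilityMeasure P]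
    (X : Ω → ℕ) (hXm : Measurable X) (hX01 : ∀ ω, X ω ≤ 1) (S : Set Ω) :
    (P (S ∩ {ω | X ω = 0})).toReal + (P ({ω | X ω = 1} ∩ S)).toReal = (P S).toReal := by
  have hm : MeasurableSet {ω | X ω = 1} := hXm (measurableSet_singleton 1)
  have := measureReal_inter_add_sdiff (μ := P) (s := S) hm
  have e : S \ {ω | X ω = 1} = S ∩ {ω | X ω = 0} := by
    ext ω
    have := hX01 ω
    simp only [mem_diff, mem_inter_iff, mem_ofPred_eq]
    constructor
    · rintro ⟨a, b⟩; exact ⟨a, by omega⟩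
    · rintro ⟨a, b⟩; exact ⟨a, by omega⟩
  rw [e] at this
  rw [inter_comm {ω | X ω = 1} S, add_comm]
  exact this

/-- The cdf of `Y_0` given `X = 0` lies between the two clipped levels. -/
lemma aux_bounds {Ω : Type*} [MeasurableSpace Ω] (P : Measure Ω) [IsProbabilityMeasure P]
    (X : Ω → ℕ) (V : Ω → ℝ) (hV : Measurable V) (hXm : Measurable X) (hX01 : ∀ ω, X ω ≤ 1)
    (hp1 : px P X 1 ∈ Set.Ioo (0:ℝ) 1) (c : ℝ) (h : CDep P X V c) (y : ℝ) :
    condCDF' P X V 0 y ≤ qUp (px P X 0) c (ProbabilityTheory.cdf (P.map V) y) ∧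
    qLo (px P X 0) c (ProbabilityTheory.cdf (P.map V) y) ≤ condCDF' P X V 0 y := by
  have : IsProbabilityMeasure (P.map V) := Measure.isProbabilityMeasure_map hV.aemeasurable
  obtain ⟨a1, a2⟩ := aux_cdep P X V hV c h (Iic y) measurableSet_Iic
  obtain ⟨b1, b2⟩ := aux_cdep P X V hV c h (Ioi y) measurableSet_Ioi
  have hF : (P.map V).real (Iic y) = ProbabilityTheory.cdf (P.map V) y :=
    (ProbabilityTheory.cdf_eq_real _ y).symm
  have hF' : (P.map V).real (Ioi y) = 1 - ProbabilityTheory.cdf (P.map V) y := by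
    rw [← hF, ← compl_Iic, probReal_compl_eq_one_sub measurableSet_Iic]
  have hFP : (P (V ⁻¹' Iic y)).toReal = ProbabilityTheory.cdf (P.map V) y := by
    rw [← hF, measureReal_def, Measure.map_apply hV measurableSet_Iic]
  have hFP' : (P (V ⁻¹' Ioi y)).toReal = 1 - ProbabilityTheory.cdf (P.map V) y := by
    rw [← hF', measureReal_def, Measure.map_apply hV measurableSet_Ioi]
  have s1 := aux_px P X hXm hX01 (V ⁻¹' Iic y)
  have s2 := aux_px P X hXm hX01 (V ⁻¹' Ioi y)
  have s3 := aux_px P X hXm hX01 univ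
  have s4 : (P ({ω | X ω = 1} ∩ V ⁻¹' Iic y)).toReal + (P ({ω | X ω = 1} ∩ V ⁻¹' Ioi y)).toReal
      = px P X 1 := by
    have := measureReal_inter_add_sdiff (μ := P) (s := {ω | X ω = 1}) (hV (measurableSet_Iic (a := y)))
    rw [diff_eq, ← preimage_compl, compl_Iic] at this
    exact this
  rw [hFP] at s1
  rw [hFP'] at s2
  rw [hF] at a1 a2
  rw [hF'] at b1 b2
  simp only [univ_inter, inter_univ, measure_univ, ENNReal.toReal_one] at s3
  have s3' : px P X 0 + px P X 1 = 1 := s3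
  have hN : condCDF' P X V 0 y = (P (V ⁻¹' Iic y ∩ {ω | X ω = 0})).toReal / px P X 0 := rfl
  rw [hN]
  have n1 : 0 ≤ (P (V ⁻¹' Iic y ∩ {ω | X ω = 0})).toReal := ENNReal.toReal_nonneg
  have n2 : 0 ≤ (P (V ⁻¹' Ioi y ∩ {ω | X ω = 0})).toReal := ENNReal.toReal_nonneg
  have n3 : 0 ≤ (P ({ω | X ω = 1} ∩ V ⁻¹' Iic y)).toReal := ENNReal.toReal_nonneg
  have n4 : 0 ≤ (P ({ω | X ω = 1} ∩ V ⁻¹' Ioi y)).toReal := ENNReal.toReal_nonneg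
  generalize (P (V ⁻¹' Iic y ∩ {ω | X ω = 0})).toReal = N at *
  generalize (P (V ⁻¹' Ioi y ∩ {ω | X ω = 0})).toReal = N' at *
  generalize (P ({ω | X ω = 1} ∩ V ⁻¹' Iic y)).toReal = M at *
  generalize (P ({ω | X ω = 1} ∩ V ⁻¹' Ioi y)).toReal = M' at *
  generalize ProbabilityTheory.cdf (P.map V) y = F at *
  generalize px P X 1 = p1 at *
  generalize px P X 0 = p0 at *
  have hp0 : 0 < p0 := by linarith [hp1.2]
  obtain rfl : p1 = 1 - p0 := by linarith
  constructor
  · unfold qUp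
    refine le_min (le_min ?_ ?_) ?_
    · rw [div_le_iff₀ hp0, add_mul]
      have : c / p0 * min F (1 - F) * p0 = c * min F (1 - F) := by field_simp
      rw [this]
      rcases min_cases F (1 - F) with ⟨e, _⟩ | ⟨e, _⟩ <;> rw [e] <;> nlinarith
    · exact div_le_div_of_nonneg_right (by linarith) hp0.le
    · rw [div_le_iff₀ hp0]; linarith
  · unfold qLo
    refine max_le (max_le ?_ ?_) (div_nonneg n1 hp0.le)
    · rw [le_div_iff₀ hp0, sub_mul]
      have : c / p0 * min F (1 - F) * p0 = c * min F (1 - F) := by field_simp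
      rw [this]
      rcases min_cases F (1 - F) with ⟨e, _⟩ | ⟨e, _⟩ <;> rw [e] <;> nlinarith
    · rw [le_div_iff₀ hp0, add_mul, div_mul_cancel₀ _ hp0.ne']; linarith

/-- Bounds on the average effect of treatment on the treated under
`c`-dependence of `X` with `Y_0`:
`E(Y∣X=1) - (Ē₀ - p₀ E(Y∣X=0))/p₁ ≤ ATT ≤ E(Y∣X=1) - (E̲₀ - p₀ E(Y∣X=0))/p₁`,
where `E̲₀ = ∫_0^1 Q̲ᶜ₀(τ) dτ` and `Ē₀ = ∫_0^1 Q̄ᶜ₀(τ) dτ` (endpoints possibly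
`±∞`). -/
theorem att_bounds {Ω : Type*} [MeasurableSpace Ω]
    (P : Measure Ω) [IsProbabilityMeasure P]
    (Yv : ℕ → Ω → ℝ) (X : Ω → ℕ) (Y : Ω → ℝ)
    (hYm : ∀ x, Measurable (Yv x)) (hXm : Measurable X)
    (hX01 : ∀ ω, X ω ≤ 1)
    (hY : ∀ ω, Y ω = Yv (X ω) ω)
    (hp1 : px P X 1 ∈ Set.Ioo (0:ℝ) 1)
    (lo0 hi0 : EReal) (hlh : lo0 < hi0)
    (hcont : ∀ x' ≤ 1, Continuous (condCDF' P X (Yv 0) x'))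
    (hmono : ∀ x' ≤ 1, StrictMonoOn (condCDF' P X (Yv 0) x')
      {y : ℝ | lo0 ≤ (y : EReal) ∧ (y : EReal) ≤ hi0})
    (hsupp : ∀ x' ≤ 1, ∀ y : ℝ,
      ((y : EReal) ≤ lo0 → condCDF' P X (Yv 0) x' y = 0) ∧
      (hi0 ≤ (y : EReal) → condCDF' P X (Yv 0) x' y = 1))
    (c : ℝ) (hc : c ∈ Set.Icc (0:ℝ) 1)
    (hdep0 : CDep P X (Yv 0) c)
    (hint : ∀ x ≤ 1, Integrable (Yv x) P)
    (hcondint : ∀ x ≤ 1, IntegrableOn Y {ω | X ω = x} P) :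
    (((∫ ω in {ω | X ω = 1}, Y ω ∂P) / px P X 1 : ℝ) : EReal) -
        (eint01 (fun τ => Qgen (condCDF' P X Y 0) lo0 hi0 (qUp (px P X 0) c τ)) -
            ((px P X 0 * ((∫ ω in {ω | X ω = 0}, Y ω ∂P) / px P X 0) : ℝ) : EReal)) /
          ((px P X 1 : ℝ) : EReal) ≤
      (((∫ ω in {ω | X ω = 1}, (Yv 1 ω - Yv 0 ω) ∂P) / px P X 1 : ℝ) : EReal) ∧
    (((∫ ω in {ω | X ω = 1}, (Yv 1 ω - Yv 0 ω) ∂P) / px P X 1 : ℝ) : EReal) ≤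
      (((∫ ω in {ω | X ω = 1}, Y ω ∂P) / px P X 1 : ℝ) : EReal) -
        (eint01 (fun τ => Qgen (condCDF' P X Y 0) lo0 hi0 (qLo (px P X 0) c τ)) -
            ((px P X 0 * ((∫ ω in {ω | X ω = 0}, Y ω ∂P) / px P X 0) : ℝ) : EReal)) /
          ((px P X 1 : ℝ) : EReal) := by
  have hp0' : px P X 0 + px P X 1 = 1 := by
    have s3 := aux_px P X hXm hX01 univ
    simp only [univ_inter, inter_univ, measure_univ, ENNReal.toReal_one] at s3
    exact s3
  have hp1pos := hp1.1
  have hp0 : 0 < px P X 0 := by linarith [hp1.2]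
  have hV := hYm 0
  have : IsProbabilityMeasure (P.map (Yv 0)) := Measure.isProbabilityMeasure_map hV.aemeasurable
  have hm0 : MeasurableSet {ω | X ω = 0} := hXm (measurableSet_singleton 0)
  have hm1 : MeasurableSet {ω | X ω = 1} := hXm (measurableSet_singleton 1)
  have hcdfY : condCDF' P X Y 0 = condCDF' P X (Yv 0) 0 := by
    funext y
    unfold condCDF'
    congr 3
    ext ω
    simp only [mem_inter_iff, mem_ofPred_eq]
    constructor
    · rintro ⟨a, b⟩; rw [hY, b] at a; exact ⟨a, b⟩
    · rintro ⟨a, b⟩; exact ⟨by rw [hY, b]; exact a, b⟩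
  rw [hcdfY]
  set F := ProbabilityTheory.cdf (P.map (Yv 0)) with hFdef
  have hFmono : Monotone F := ProbabilityTheory.monotone_cdf _
  have hmix : ∀ y, F y = px P X 0 * condCDF' P X (Yv 0) 0 y
      + px P X 1 * condCDF' P X (Yv 0) 1 y := by
    intro y
    have s1 := aux_px P X hXm hX01 (Yv 0 ⁻¹' Iic y)
    have hFP : (P (Yv 0 ⁻¹' Iic y)).toReal = F y := by
      rw [hFdef, ProbabilityTheory.cdf_eq_real, measureReal_def,
        Measure.map_apply hV measurableSet_Iic]
    rw [← hFP, ← s1, inter_comm {ω | X ω = 1}]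
    have e0 : condCDF' P X (Yv 0) 0 y = (P (Yv 0 ⁻¹' Iic y ∩ {ω | X ω = 0})).toReal / px P X 0 :=
      rfl
    have e1 : condCDF' P X (Yv 0) 1 y = (P (Yv 0 ⁻¹' Iic y ∩ {ω | X ω = 1})).toReal / px P X 1 :=
      rfl
    rw [e0, e1, mul_div_cancel₀ _ hp0.ne', mul_div_cancel₀ _ hp1pos.ne']
  have hFcont : Continuous F := by
    have : (F : ℝ → ℝ) = fun y => px P X 0 * condCDF' P X (Yv 0) 0 y
      + px P X 1 * condCDF' P X (Yv 0) 1 y := funext hmix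
    rw [this]
    exact (continuous_const.mul (hcont 0 (by norm_num))).add
      (continuous_const.mul (hcont 1 le_rfl))
  have hFQ : ∀ τ ∈ Ioo (0:ℝ) 1, F (sInf {z : ℝ | τ ≤ F z}) = τ := by
    intro τ hτ
    refine le_antisymm ?_ ((aux_quant_le hτ.1 hτ.2 _).mp le_rfl)
    have hl : Filter.Tendsto F (nhdsWithin (sInf {z : ℝ | τ ≤ F z}) (Iio (sInf {z : ℝ | τ ≤ F z})))
        (nhds (F (sInf {z : ℝ | τ ≤ F z}))) := hFcont.continuousAt.mono_left nhdsWithin_le_nhds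
    refine le_of_tendsto hl ?_
    filter_upwards [self_mem_nhdsWithin] with z hz
    by_contra hlt
    have := (aux_quant_le hτ.1 hτ.2 z).mpr (not_le.mp hlt).le
    exact absurd hz (not_lt.mpr this)
  have hB := aux_bounds P X (Yv 0) hV hXm hX01 hp1 c hdep0
  -- position of `y` in the support
  have hlo : ∀ y, 0 < F y → lo0 < (y : EReal) := by
    intro y hy
    by_contra hn
    have h0 := (hsupp 0 (by norm_num) y).1 (not_lt.mp hn)
    have h1 := (hsupp 1 le_rfl y).1 (not_lt.mp hn)
    rw [hmix, h0, h1] at hy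
    simp at hy
  have hhi : ∀ y, F y < 1 → (y : EReal) < hi0 := by
    intro y hy
    by_contra hn
    have h0 := (hsupp 0 (by norm_num) y).2 (not_lt.mp hn)
    have h1 := (hsupp 1 le_rfl y).2 (not_lt.mp hn)
    rw [hmix, h0, h1] at hy
    linarith
  have hstrict : ∀ y, 0 < F y → F y < 1 → ∀ z, z < y →
      condCDF' P X (Yv 0) 0 z < condCDF' P X (Yv 0) 0 y := by
    intro y hy0 hy1 z hz
    have hly := hlo y hy0
    have hyh := hhi y hy1
    have hzy : (z : EReal) < y := EReal.coe_lt_coe_iff.mpr hz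
    by_cases hzl : lo0 ≤ (z : EReal)
    · exact hmono 0 (by norm_num) ⟨hzl, (hzy.trans hyh).le⟩ ⟨hly.le, hyh.le⟩ hz
    · obtain ⟨w, hw1, hw2⟩ := EReal.lt_iff_exists_real_btwn.mp hly
      have h0 := (hsupp 0 (by norm_num) z).1 (not_le.mp hzl).le
      have hw0 : 0 ≤ condCDF' P X (Yv 0) 0 w := by unfold condCDF'; positivity
      have := hmono 0 (by norm_num) ⟨hw1.le, (hw2.trans hyh).le⟩ ⟨hly.le, hyh.le⟩
        (EReal.coe_lt_coe_iff.mp hw2)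
      linarith
  have hup : ∀ τ ∈ Ioo (0:ℝ) 1, ((sInf {z : ℝ | τ ≤ F z} : ℝ) : EReal) ≤
      Qgen (condCDF' P X (Yv 0) 0) lo0 hi0 (qUp (px P X 0) c τ) := by
    intro τ hτ
    have hF := hFQ τ hτ
    set y := sInf {z : ℝ | τ ≤ F z}
    have hy0 : 0 < F y := by rw [hF]; exact hτ.1
    have hy1 : F y < 1 := by rw [hF]; exact hτ.2
    have hb := (hB y).1
    rw [← hFdef, hF] at hb
    unfold Qgen
    split_ifs with h1 h2
    · exfalso
      have : 0 < qUp (px P X 0) c τ := by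
        unfold qUp
        have hmin : 0 < min τ (1 - τ) := lt_min hτ.1 (by linarith [hτ.2])
        have hcp : 0 ≤ c / px P X 0 := div_nonneg hc.1 hp0.le
        refine lt_min (lt_min ?_ (div_pos hτ.1 hp0)) one_pos
        have := mul_nonneg hcp hmin.le
        linarith [hτ.1]
      linarith
    · exact (hhi y hy1).le
    · rw [EReal.coe_le_coe_iff]
      generalize qUp (px P X 0) c τ = t at *
      refine le_csInf ?_ ?_
      · have hlim := (ProbabilityTheory.tendsto_cdf_atTop (P.map (Yv 0))).eventually
          (lt_mem_nhds (show 1 - px P X 0 * (1 - t) < 1 by nlinarith))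
        obtain ⟨w, hw⟩ := hlim.exists
        refine ⟨w, ?_⟩
        have h3 : (ProbabilityTheory.cdf (P.map (Yv 0)) w - 1) / px P X 0 + 1 ≤
            condCDF' P X (Yv 0) 0 w :=
          ((le_max_right _ _).trans (le_max_left _ _)).trans (hB w).2
        refine le_trans ?_ h3
        have : t - 1 ≤ (ProbabilityTheory.cdf (P.map (Yv 0)) w - 1) / px P X 0 := by
          rw [le_div_iff₀ hp0]; linarith
        linarith
      · intro z hz
        by_contra hzy
        have := hstrict y hy0 hy1 z (not_le.mp hzy)
        have hz' : t ≤ condCDF' P X (Yv 0) 0 z := hz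
        linarith
  have hdn : ∀ τ ∈ Ioo (0:ℝ) 1,
      Qgen (condCDF' P X (Yv 0) 0) lo0 hi0 (qLo (px P X 0) c τ) ≤
        ((sInf {z : ℝ | τ ≤ F z} : ℝ) : EReal) := by
    intro τ hτ
    have hF := hFQ τ hτ
    set y := sInf {z : ℝ | τ ≤ F z}
    have hy0 : 0 < F y := by rw [hF]; exact hτ.1
    have hb := (hB y).2
    rw [← hFdef, hF] at hb
    unfold Qgen
    split_ifs with h1 h2
    · exact (hlo y hy0).le
    · exfalso
      have : qLo (px P X 0) c τ < 1 := by
        unfold qLo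
        have hmin : 0 < min τ (1 - τ) := lt_min hτ.1 (by linarith [hτ.2])
        have hcp : 0 ≤ c / px P X 0 := div_nonneg hc.1 hp0.le
        refine max_lt (max_lt ?_ ?_) one_pos
        · have := mul_nonneg hcp hmin.le
          linarith [hτ.2]
        · have : (τ - 1) / px P X 0 < 0 := div_neg_of_neg_of_pos (by linarith [hτ.2]) hp0
          linarith
      linarith
    · rw [EReal.coe_le_coe_iff]
      generalize qLo (px P X 0) c τ = t at *
      refine csInf_le ?_ hb
      have hlim := (ProbabilityTheory.tendsto_cdf_atBot (P.map (Yv 0))).eventually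
        (gt_mem_nhds (show 0 < px P X 0 * t by exact mul_pos hp0 (not_le.mp h1)))
      obtain ⟨w, hw⟩ := hlim.exists
      refine ⟨w, fun z hz => ?_⟩
      by_contra hzw
      have h3 : condCDF' P X (Yv 0) 0 z ≤ F z / px P X 0 :=
        (hB z).1.trans ((min_le_left _ _).trans (min_le_right _ _))
      have h4 : t ≤ F z / px P X 0 := le_trans hz h3
      rw [le_div_iff₀ hp0] at h4
      have h5 := hFmono (not_le.mp hzw).le
      have hw' : F w < px P X 0 * t := hw
      linarith
  have hidm : Integrable (fun x : ℝ => x) (P.map (Yv 0)) := by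
    rw [integrable_map_measure (by fun_prop) hV.aemeasurable]
    exact hint 0 (by norm_num)
  have hE := aux_eint_quant (P.map (Yv 0)) hidm
  have hEY : ∫ x, x ∂(P.map (Yv 0)) = ∫ ω, Yv 0 ω ∂P :=
    integral_map hV.aemeasurable (by fun_prop)
  rw [hEY] at hE
  have hU := aux_eint_mono hup
  have hL := aux_eint_mono hdn
  rw [← hFdef] at hE
  rw [hE] at hU hL
  have hY1 : ∫ ω in {ω | X ω = 1}, Y ω ∂P = ∫ ω in {ω | X ω = 1}, Yv 1 ω ∂P :=
    setIntegral_congr_fun hm1 (fun ω (hω : X ω = 1) => by simp only [hY, hω])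
  have hY0 : ∫ ω in {ω | X ω = 0}, Y ω ∂P = ∫ ω in {ω | X ω = 0}, Yv 0 ω ∂P :=
    setIntegral_congr_fun hm0 (fun ω (hω : X ω = 0) => by simp only [hY, hω])
  have hsplit : ∫ ω in {ω | X ω = 1}, Yv 0 ω ∂P + ∫ ω in {ω | X ω = 0}, Yv 0 ω ∂P
      = ∫ ω, Yv 0 ω ∂P := by
    have hc1 : {ω | X ω = 0} = {ω | X ω = 1}ᶜ := by
      ext ω
      have := hX01 ω
      simp only [mem_ofPred_eq, mem_compl_iff]
      omega
    rw [hc1]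
    exact integral_add_compl hm1 (hint 0 (by norm_num))
  have hATT : (∫ ω in {ω | X ω = 1}, (Yv 1 ω - Yv 0 ω) ∂P) / px P X 1 =
      (∫ ω in {ω | X ω = 1}, Y ω ∂P) / px P X 1 - ((∫ ω, Yv 0 ω ∂P) -
        px P X 0 * ((∫ ω in {ω | X ω = 0}, Y ω ∂P) / px P X 0)) / px P X 1 := by
    rw [integral_sub (hint 1 le_rfl).integrableOn (hint 0 (by norm_num)).integrableOn,
      mul_div_cancel₀ _ hp0.ne', hY1, hY0, ← hsplit]
    ring
  have hp1E : (0 : EReal) ≤ ((px P X 1 : ℝ) : EReal) := by exact_mod_cast hp1pos.le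
  rw [hATT, EReal.coe_sub ((∫ ω in {ω | X ω = 1}, Y ω ∂P) / px P X 1), EReal.coe_div (_ - _),
    EReal.coe_sub (∫ ω, Yv 0 ω ∂P)]
  constructor
  · exact EReal.sub_le_sub le_rfl
      (EReal.div_le_div_right_of_nonneg hp1E (EReal.sub_le_sub hU le_rfl))
  · exact EReal.sub_le_sub le_rfl
      (EReal.div_le_div_right_of_nonneg hp1E (EReal.sub_le_sub hL le_rfl))
end
end
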